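/- Let L = 2, A ∈ ℝ^{M×N}, b ∈ ℝ^M, and η̃ > 0. Suppose (r,u) follows the weight-normalized gradient flow with learning rates (η_r, η_u) = (η̃, 1), with r(0) = r₀ > 0, u(0) = u₀ > 0 entrywise, ‖u₀‖₂ = 1, and r₀ ≤ min(η̃^{1/2}, ‖A†b‖₂^{1/2}). Assume there exists v > 0 entrywise with Av = 0 and that S₊ = {z ≥ 0 : Az = b} is nonempty. Set x(t) = (r(t)/‖u(t)‖₂) u(t) and x̃(t) = x(t)^{⊙2}. Then the limit x̃_∞ = lim_{t→∞} x̃(t) exists. -/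

import Mathlib

open Filter Topology

noncomputable section

variable {M N : ℕ}

/-- Entrywise (Hadamard) natural power `x^{⊙L}`. -/
def hadPow (x : Fin N → ℝ) (L : ℕ) : Fin N → ℝ := fun n => x n ^ L

/-- Euclidean (ℓ2) norm of a vector. -/
def eucNorm (u : Fin N → ℝ) : ℝ := Real.sqrt (∑ n, u n ^ 2)

/-- The loss `𝓛(x) = (1/(2L)) ‖A x^{⊙L} − b‖₂²`. -/
def loss (A : Matrix (Fin M) (Fin N) ℝ) (b : Fin M → ℝ) (L : ℕ) (x : Fin N → ℝ) : ℝ :=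
  (1 / (2 * (L : ℝ))) * ∑ m, (A.mulVec (hadPow x L) m - b m) ^ 2

/-- The gradient `∇𝓛(x) = [Aᵀ(A x^{⊙L} − b)] ⊙ x^{⊙(L−1)}`. -/
def gradLoss (A : Matrix (Fin M) (Fin N) ℝ) (b : Fin M → ℝ) (L : ℕ) (x : Fin N → ℝ) :
    Fin N → ℝ :=
  fun n => A.transpose.mulVec (A.mulVec (hadPow x L) - b) n * x n ^ (L - 1)

/-- The weight-normalized vector `x = (r/‖u‖₂) u`. -/
def normVec (r : ℝ) (u : Fin N → ℝ) : Fin N → ℝ := (r / eucNorm u) • u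

/-- `∇_r 𝓛̃(r,u) = (uᵀ/‖u‖₂) ∇𝓛((r/‖u‖₂)u)`. -/
def gradR (A : Matrix (Fin M) (Fin N) ℝ) (b : Fin M → ℝ) (L : ℕ) (r : ℝ)
    (u : Fin N → ℝ) : ℝ :=
  ∑ n, (u n / eucNorm u) * gradLoss A b L (normVec r u) n

/-- `∇_u 𝓛̃(r,u) = (r/‖u‖₂)(I − uuᵀ/‖u‖₂²) ∇𝓛((r/‖u‖₂)u)`. -/
def gradU (A : Matrix (Fin M) (Fin N) ℝ) (b : Fin M → ℝ) (L : ℕ) (r : ℝ)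
    (u : Fin N → ℝ) : Fin N → ℝ :=
  fun n => (r / eucNorm u) * (gradLoss A b L (normVec r u) n -
    (∑ k, u k * gradLoss A b L (normVec r u) k) / eucNorm u ^ 2 * u n)

/-- Weight-normalized gradient flow with (possibly time-dependent) learning rates
`(η_r, η_u)`: `∂ₜ r = −η_r ∇_r 𝓛̃(r,u)`, `∂ₜ u = −η_u ∇_u 𝓛̃(r,u)` for `t ≥ 0`. -/
def WNFlow (A : Matrix (Fin M) (Fin N) ℝ) (b : Fin M → ℝ) (L : ℕ)
    (ηr ηu : ℝ → ℝ) (r : ℝ → ℝ) (u : ℝ → Fin N → ℝ) : Prop :=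
  (∀ t, 0 ≤ t → HasDerivAt r (-(ηr t * gradR A b L (r t) (u t))) t) ∧
  (∀ t, 0 ≤ t → ∀ n, HasDerivAt (fun s => u s n) (-(ηu t * gradU A b L (r t) (u t) n)) t)

/-- Plain gradient flow `∂ₜ x = −∇𝓛(x)` for `t ≥ 0`. -/
def GradFlow (A : Matrix (Fin M) (Fin N) ℝ) (b : Fin M → ℝ) (L : ℕ)
    (x : ℝ → Fin N → ℝ) : Prop :=
  ∀ t, 0 ≤ t → ∀ n, HasDerivAt (fun s => x s n) (-gradLoss A b L (x t) n) t

/-- The set of nonnegative solutions `S₊ = {z ≥ 0 : Az = b}`. -/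
def Splus (A : Matrix (Fin M) (Fin N) ℝ) (b : Fin M → ℝ) : Set (Fin N → ℝ) :=
  {z | (∀ n, 0 ≤ z n) ∧ A.mulVec z = b}

/-- Weighted ℓ1-norm `‖z‖_{w,1} = ‖w ⊙ z‖₁`. -/
def wl1 (w z : Fin N → ℝ) : ℝ := ∑ n, |w n * z n|

/-- The Moore–Penrose conditions characterizing the pseudoinverse `A†`. -/
def IsMoorePenrose (A : Matrix (Fin M) (Fin N) ℝ) (Adag : Matrix (Fin N) (Fin M) ℝ) :
    Prop :=
  A * Adag * A = A ∧ Adag * A * Adag = Adag ∧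
    (A * Adag).transpose = A * Adag ∧ (Adag * A).transpose = Adag * A

/-- The potential `F` defining the Bregman divergence. -/
def breF (L : ℕ) (p : Fin N → ℝ) : ℝ :=
  if L = 2 then (1 / 2) * ∑ n, (p n * Real.log (p n) - p n)
  else ((L : ℝ) / (2 * (2 - (L : ℝ)))) * ∑ n, p n ^ ((2 : ℝ) / (L : ℝ))

/-- The gradient of the potential `F`. -/
def breGradF (L : ℕ) (q : Fin N → ℝ) : Fin N → ℝ :=
  fun n => if L = 2 then (1 / 2) * Real.log (q n)
  else (1 / (2 - (L : ℝ))) * q n ^ ((2 : ℝ) / (L : ℝ) - 1)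

/-- Bregman divergence `D_F(p,q) = F(p) − F(q) − ⟨∇F(q), p − q⟩`. -/
def bregman (L : ℕ) (p q : Fin N → ℝ) : ℝ :=
  breF L p - breF L q - ∑ n, breGradF L q n * (p n - q n)


theorem aux_mvt (E f : ℝ → ℝ) (h : ∀ t, 0 ≤ t → HasDerivAt E (f t) t) (s t : ℝ) (hs : 0 ≤ s)
    (hst : s < t) : ∃ c, s < c ∧ c < t ∧ E t - E s = f c * (t - s) := by
  obtain ⟨c, hc, h2⟩ := exists_hasDerivAt_eq_slope E f hst
    (fun x hx => (h x (hs.trans hx.1)).continuousAt.continuousWithinAt)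
    (fun x hx => h x (hs.trans hx.1.le))
  refine ⟨c, hc.1, hc.2, ?_⟩
  rw [h2, div_mul_cancel₀ _ (sub_pos.2 hst).ne']

theorem aux_mono (E f : ℝ → ℝ) (h : ∀ t, 0 ≤ t → HasDerivAt E (f t) t)
    (hf : ∀ t, 0 ≤ t → 0 ≤ f t) (s t : ℝ) (hs : 0 ≤ s) (hst : s ≤ t) : E s ≤ E t := by
  rcases hst.eq_or_lt with rfl | hlt
  · exact le_rfl
  · obtain ⟨c, h1, h2, h3⟩ := aux_mvt E f h s t hs hlt
    have := mul_nonneg (hf c (hs.trans h1.le)) (sub_pos.2 hlt).le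
    linarith

theorem aux_const (E : ℝ → ℝ) (h : ∀ t, 0 ≤ t → HasDerivAt E 0 t) (t : ℝ) (ht : 0 ≤ t) :
    E t = E 0 := by
  rcases ht.eq_or_lt with rfl | hlt
  · rfl
  · obtain ⟨c, h1, h2, h3⟩ := aux_mvt E (fun _ => 0) h 0 t le_rfl hlt
    linarith

theorem aux_pos (y k : ℝ → ℝ) (hy : ∀ t, 0 ≤ t → HasDerivAt y (k t * y t) t)
    (hk : ∀ t, 0 ≤ t → ContinuousAt k t) (h0 : 0 < y 0) (t : ℝ) (ht : 0 ≤ t) : 0 < y t := by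
  have hkc : Continuous (fun s => k (max s 0)) := by
    rw [continuous_iff_continuousAt]
    intro s
    exact ContinuousAt.comp (f := fun s => max s 0) (g := k) (hk _ (le_max_right _ _))
      (by fun_prop)
  set H : ℝ → ℝ := fun t => ∫ s in (0:ℝ)..t, k (max s 0) with hH
  have hHd : ∀ t, 0 ≤ t → HasDerivAt H (k t) t := by
    intro t ht
    have := hkc.integral_hasStrictDerivAt 0 t
    have h2 := this.hasDerivAt
    simpa [max_eq_left ht] using h2
  have hc := aux_const (fun t => y t * Real.exp (-H t)) (by
    intro t ht
    have := (hy t ht).mul ((hHd t ht).neg.exp)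
    refine this.congr_deriv ?_
    simp only [Pi.neg_apply]
    ring) t ht
  have hpos : 0 < y t * Real.exp (-H t) := by
    rw [hc]; positivity
  exact pos_of_mul_pos_left hpos (Real.exp_pos _).le

theorem aux_lim (E : ℝ → ℝ) (C : ℝ) (hm : ∀ s t, 0 ≤ s → s ≤ t → E s ≤ E t)
    (hb : ∀ t, 0 ≤ t → E t ≤ C) : ∃ l, Tendsto E atTop (𝓝 l) := by
  have h := tendsto_atTop_ciSup (f := fun t => E (max t 0))
    (fun s t hst => hm _ _ (le_max_right _ _) (max_le_max_right 0 hst))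
    ⟨C, by rintro _ ⟨t, rfl⟩; exact hb _ (le_max_right _ _)⟩
  refine ⟨_, h.congr' ?_⟩
  filter_upwards [eventually_ge_atTop 0] with t ht
  rw [max_eq_left ht]

theorem aux_barbalat (E f f' : ℝ → ℝ) (l C : ℝ) (h : ∀ t, 0 ≤ t → HasDerivAt E (f t) t)
    (hf : ∀ t, 0 ≤ t → 0 ≤ f t) (hf' : ∀ t, 0 ≤ t → HasDerivAt f (f' t) t)
    (hC : ∀ t, 0 ≤ t → |f' t| ≤ C) (hl : Tendsto E atTop (𝓝 l)) : Tendsto f atTop (𝓝 0) := by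
  have hC0 : 0 ≤ C := (abs_nonneg _).trans (hC 0 le_rfl)
  have key : ∀ d, 0 < d → ∀ t, 0 ≤ t → f t ≤ (E (t + d) - E t) / d + C * d := by
    intro d hd t ht
    obtain ⟨c, h1, h2, h3⟩ := aux_mvt E f h t (t + d) ht (by linarith)
    obtain ⟨c', h1', h2', h3'⟩ := aux_mvt f f' hf' t c ht h1
    have e1 : (E (t + d) - E t) / d = f c := by
      rw [h3]; field_simp; ring
    rw [e1]
    have := (abs_le.1 (hC c' (by linarith))).1
    nlinarith [mul_nonneg (sub_nonneg.2 this) (sub_pos.2 h1).le]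
  rw [Metric.tendsto_atTop]
  intro ε hε
  set d := ε / (2 * (C + 1)) with hd
  have hdp : 0 < d := by positivity
  have hCd : C * d < ε / 2 := by
    rw [hd, mul_div_assoc', div_lt_div_iff₀ (by positivity) (by positivity)]
    nlinarith
  have ht : Tendsto (fun t => (E (t + d) - E t) / d) atTop (𝓝 ((l - l) / d)) :=
    ((hl.comp (tendsto_atTop_add_const_right _ d tendsto_id)).sub hl).div_const d
  rw [sub_self, zero_div] at ht
  obtain ⟨T, hT⟩ := (Metric.tendsto_atTop.1 ht) (ε / 2) (by positivity)
  refine ⟨max T 0, fun t htt => ?_⟩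
  have h1 := hT t ((le_max_left _ _).trans htt)
  have h0 : 0 ≤ t := (le_max_right _ _).trans htt
  rw [Real.dist_eq, sub_zero] at h1 ⊢
  rw [abs_of_nonneg (hf t h0)]
  have := key d hdp t h0
  have := (abs_lt.1 h1).2
  linarith

def Bd (f : ℝ → ℝ) : Prop := ∃ C, ∀ t, 0 ≤ t → |f t| ≤ C

theorem Bd.const (c : ℝ) : Bd (fun _ => c) := ⟨|c|, fun _ _ => le_rfl⟩

theorem Bd.add {f g : ℝ → ℝ} (hf : Bd f) (hg : Bd g) : Bd (fun t => f t + g t) := by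
  obtain ⟨C, hC⟩ := hf
  obtain ⟨D, hD⟩ := hg
  exact ⟨C + D, fun t ht => (abs_add_le _ _).trans (add_le_add (hC t ht) (hD t ht))⟩

theorem Bd.mul {f g : ℝ → ℝ} (hf : Bd f) (hg : Bd g) : Bd (fun t => f t * g t) := by
  obtain ⟨C, hC⟩ := hf
  obtain ⟨D, hD⟩ := hg
  refine ⟨C * D, fun t ht => ?_⟩
  rw [abs_mul]
  exact mul_le_mul (hC t ht) (hD t ht) (abs_nonneg _) ((abs_nonneg _).trans (hC t ht))

/-- bounded with bounded derivative -/
def Nice (f : ℝ → ℝ) : Prop :=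
  Bd f ∧ ∃ f' : ℝ → ℝ, Bd f' ∧ ∀ t, 0 ≤ t → HasDerivAt f (f' t) t

theorem Nice.const (c : ℝ) : Nice (fun _ => c) :=
  ⟨Bd.const c, fun _ => 0, Bd.const 0, fun t _ => hasDerivAt_const t c⟩

theorem Nice.add {f g : ℝ → ℝ} (hf : Nice f) (hg : Nice g) : Nice (fun t => f t + g t) := by
  obtain ⟨bf, f', bf', df⟩ := hf
  obtain ⟨bg, g', bg', dg⟩ := hg
  exact ⟨bf.add bg, _, bf'.add bg', fun t ht => (df t ht).add (dg t ht)⟩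

theorem Nice.mul {f g : ℝ → ℝ} (hf : Nice f) (hg : Nice g) : Nice (fun t => f t * g t) := by
  obtain ⟨bf, f', bf', df⟩ := hf
  obtain ⟨bg, g', bg', dg⟩ := hg
  exact ⟨bf.mul bg, _, (bf'.mul bg).add (bf.mul bg'), fun t ht => (df t ht).mul (dg t ht)⟩

theorem Nice.pow {f : ℝ → ℝ} (hf : Nice f) (k : ℕ) : Nice (fun t => f t ^ k) := by
  induction k with
  | zero => simpa using Nice.const 1
  | succ k ih => simpa only [pow_succ] using ih.mul hf

theorem Bd.pow {f : ℝ → ℝ} (hf : Bd f) (k : ℕ) : Bd (fun t => f t ^ k) := by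
  induction k with
  | zero => simpa using Bd.const 1
  | succ k ih => simpa only [pow_succ] using ih.mul hf

theorem Bd.sum {ι : Type} (s : Finset ι) (f : ι → ℝ → ℝ) (hf : ∀ i, Bd (f i)) :
    Bd (fun t => ∑ i ∈ s, f i t) := by
  classical
  induction s using Finset.induction_on with
  | empty => simpa using Bd.const 0
  | insert a s ha ih => simpa only [Finset.sum_insert ha] using (hf a).add ih

theorem Nice.sum {ι : Type} (s : Finset ι) (f : ι → ℝ → ℝ) (hf : ∀ i, Nice (f i)) :
    Nice (fun t => ∑ i ∈ s, f i t) := by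
  classical
  induction s using Finset.induction_on with
  | empty => simpa using Nice.const 0
  | insert a s ha ih => simpa only [Finset.sum_insert ha] using (hf a).add ih

theorem aux_cluster {X : Type} [TopologicalSpace X] (s : ℝ → X) (x : X) (φ : X → ℝ) (c : ℝ)
    (hx : MapClusterPt x atTop s) (hφ : ContinuousAt φ x)
    (hc : Tendsto (fun t => φ (s t)) atTop (𝓝 c)) : φ x = c := by
  have h := hx.continuousAt_comp hφ
  have h2 : ClusterPt (φ x) (𝓝 c) := h.clusterPt.mono hc
  by_contra hne
  exact h2.ne (disjoint_iff.1 (disjoint_nhds_nhds.2 hne))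

def eE {M N : ℕ} (A : Matrix (Fin M) (Fin N) ℝ) (b : Fin M → ℝ) (r : ℝ) (u : Fin N → ℝ)
    (m : Fin M) : ℝ := ∑ n, A m n * (r ^ 2 * u n ^ 2) + (-b m)

def gG {M N : ℕ} (A : Matrix (Fin M) (Fin N) ℝ) (b : Fin M → ℝ) (r : ℝ) (u : Fin N → ℝ)
    (n : Fin N) : ℝ := ∑ m, A m n * eE A b r u m

def sG {M N : ℕ} (A : Matrix (Fin M) (Fin N) ℝ) (b : Fin M → ℝ) (r : ℝ) (u : Fin N → ℝ) : ℝ :=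
  ∑ n, gG A b r u n * u n ^ 2

theorem gG_dot {M N : ℕ} (A : Matrix (Fin M) (Fin N) ℝ) (b : Fin M → ℝ) (r : ℝ)
    (u z : Fin N → ℝ) : ∑ n, z n * gG A b r u n = ∑ m, eE A b r u m * ∑ n, A m n * z n := by
  simp only [gG, Finset.mul_sum]
  rw [Finset.sum_comm]
  exact Finset.sum_congr rfl fun m _ => Finset.sum_congr rfl fun n _ => by ring

theorem sG_sq {M N : ℕ} (A : Matrix (Fin M) (Fin N) ℝ) (b : Fin M → ℝ) (r : ℝ)
    (u : Fin N → ℝ) :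
    r ^ 2 * sG A b r u = ∑ m, eE A b r u m * ∑ n, A m n * (r ^ 2 * u n ^ 2) := by
  rw [← gG_dot, sG, Finset.mul_sum]
  exact Finset.sum_congr rfl fun n _ => by ring

section core
variable {M N : ℕ} (A : Matrix (Fin M) (Fin N) ℝ) (b : Fin M → ℝ) (η : ℝ)
  (r : ℝ → ℝ) (u : ℝ → Fin N → ℝ)

/-- first integral part -/
theorem deriv_P (hη : 0 < η)
    (hr : ∀ t, 0 ≤ t → HasDerivAt r (-(η * r t * sG A b (r t) (u t))) t)
    (hu : ∀ t, 0 ≤ t → ∀ n, HasDerivAt (fun s => u s n)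
      (-(r t ^ 2 * u t n * (gG A b (r t) (u t) n - sG A b (r t) (u t)))) t)
    (hup : ∀ t, 0 ≤ t → ∀ n, 0 < u t n) (z : Fin N → ℝ) (t : ℝ) (ht : 0 ≤ t) :
    HasDerivAt (fun s => ∑ n, z n * Real.log (u s n) + (∑ n, z n) * (r s ^ 2 / (2 * η)))
      (-(r t ^ 2 * ∑ n, z n * gG A b (r t) (u t) n)) t := by
  have h1 : HasDerivAt (fun s => ∑ n, z n * Real.log (u s n))
      (∑ n, z n * (-(r t ^ 2 * u t n * (gG A b (r t) (u t) n - sG A b (r t) (u t))) / u t n)) t :=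
    HasDerivAt.fun_sum fun n _ => ((hu t ht n).log (hup t ht n).ne').const_mul (z n)
  have h2 := (((hr t ht).pow 2).div_const (2 * η)).const_mul (∑ n, z n)
  refine (h1.add h2).congr_deriv ?_
  have e1 : ∀ n, z n * (-(r t ^ 2 * u t n * (gG A b (r t) (u t) n - sG A b (r t) (u t))) / u t n)
      = -r t ^ 2 * (z n * gG A b (r t) (u t) n) + z n * (r t ^ 2 * sG A b (r t) (u t)) := by
    intro n
    have := (hup t ht n).ne'
    field_simp
    ring
  simp only [e1, Finset.sum_add_distrib, ← Finset.mul_sum, ← Finset.sum_mul]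
  field_simp
  norm_num
  ring

theorem deriv_E (hη : 0 < η)
    (hr : ∀ t, 0 ≤ t → HasDerivAt r (-(η * r t * sG A b (r t) (u t))) t)
    (hu : ∀ t, 0 ≤ t → ∀ n, HasDerivAt (fun s => u s n)
      (-(r t ^ 2 * u t n * (gG A b (r t) (u t) n - sG A b (r t) (u t)))) t)
    (hup : ∀ t, 0 ≤ t → ∀ n, 0 < u t n) (z : Fin N → ℝ) (hz : ∀ m, ∑ n, A m n * z n = b m)
    (t : ℝ) (ht : 0 ≤ t) :
    HasDerivAt (fun s => ∑ n, z n * Real.log (u s n) + (∑ n, z n) * (r s ^ 2 / (2 * η))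
        - r s ^ 4 / (4 * η))
      (r t ^ 2 * ∑ m, eE A b (r t) (u t) m ^ 2) t := by
  have h1 := deriv_P A b η r u hη hr hu hup z t ht
  have h2 := ((hr t ht).pow 4).div_const (4 * η)
  refine (h1.sub h2).congr_deriv ?_
  have e2 : ∑ m, eE A b (r t) (u t) m ^ 2
      = r t ^ 2 * sG A b (r t) (u t) - ∑ n, z n * gG A b (r t) (u t) n := by
    rw [sG_sq, gG_dot, ← Finset.sum_sub_distrib]
    refine Finset.sum_congr rfl fun m _ => ?_
    rw [hz m, eE]; ring
  rw [e2]
  field_simp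
  norm_num
  ring

theorem core (hη : 0 < η)
    (hr : ∀ t, 0 ≤ t → HasDerivAt r (-(η * r t * sG A b (r t) (u t))) t)
    (hu : ∀ t, 0 ≤ t → ∀ n, HasDerivAt (fun s => u s n)
      (-(r t ^ 2 * u t n * (gG A b (r t) (u t) n - sG A b (r t) (u t)))) t)
    (hr0 : 0 < r 0) (hu0 : ∀ n, 0 < u 0 n) (hn : ∀ t, 0 ≤ t → ∑ n, u t n ^ 2 = 1)
    (v : Fin N → ℝ) (hv : ∀ n, 0 < v n) (hAv : ∀ m, ∑ n, A m n * v n = 0)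
    (z0 : Fin N → ℝ) (hz0 : ∀ n, 0 ≤ z0 n) (hAz0 : ∀ m, ∑ n, A m n * z0 n = b m) :
    ∃ xinf : Fin N → ℝ, Tendsto (fun t => fun n => r t ^ 2 * u t n ^ 2) atTop (𝓝 xinf) := by
  have cu : ∀ n t, 0 ≤ t → ContinuousAt (fun s => u s n) t := fun n t ht => (hu t ht n).continuousAt
  have cr : ∀ t, 0 ≤ t → ContinuousAt r t := fun t ht => (hr t ht).continuousAt
  have ce : ∀ m t, 0 ≤ t → ContinuousAt (fun s => eE A b (r s) (u s) m) t := by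
    intro m t ht
    have := cr t ht
    have := fun n => cu n t ht
    unfold eE
    fun_prop
  have cg : ∀ n t, 0 ≤ t → ContinuousAt (fun s => gG A b (r s) (u s) n) t := by
    intro n t ht
    have := fun m => ce m t ht
    unfold gG
    fun_prop
  have cs : ∀ t, 0 ≤ t → ContinuousAt (fun s => sG A b (r s) (u s)) t := by
    intro t ht
    have := fun n => cg n t ht
    have := fun n => cu n t ht
    unfold sG
    fun_prop
  have hrp : ∀ t, 0 ≤ t → 0 < r t := by
    refine aux_pos r (fun t => -(η * sG A b (r t) (u t)))
      (fun t ht => (hr t ht).congr_deriv (by ring)) (fun t ht => ?_) hr0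
    have := cs t ht
    fun_prop
  have hup : ∀ t, 0 ≤ t → ∀ n, 0 < u t n := by
    intro t ht n
    refine aux_pos (fun t => u t n)
      (fun t => -(r t ^ 2 * (gG A b (r t) (u t) n - sG A b (r t) (u t))))
      (fun t ht => (hu t ht n).congr_deriv (by ring)) (fun t ht => ?_) (hu0 n) t ht
    have := cs t ht
    have := cg n t ht
    have := cr t ht
    fun_prop
  have hu1 : ∀ t, 0 ≤ t → ∀ n, u t n ≤ 1 := by
    intro t ht n
    have h1 : u t n ^ 2 ≤ 1 := by
      rw [← hn t ht]
      exact Finset.single_le_sum (f := fun n => u t n ^ 2) (fun i _ => sq_nonneg _)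
        (Finset.mem_univ n)
    nlinarith [hup t ht n]
  have hlog : ∀ t, 0 ≤ t → ∀ n, Real.log (u t n) ≤ 0 := fun t ht n =>
    Real.log_nonpos (hup t ht n).le (hu1 t ht n)
  have hsumlog : ∀ z : Fin N → ℝ, (∀ n, 0 ≤ z n) → ∀ t, 0 ≤ t →
      ∑ n, z n * Real.log (u t n) ≤ 0 := fun z hz t ht =>
    Finset.sum_nonpos fun n _ => mul_nonpos_of_nonneg_of_nonpos (hz n) (hlog t ht n)
  have hsq : ∀ (Z x : ℝ), Z * (x ^ 2 / (2 * η)) - x ^ 4 / (4 * η) ≤ Z ^ 2 / (4 * η) := by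
    intro Z x
    have : Z ^ 2 / (4 * η) - (Z * (x ^ 2 / (2 * η)) - x ^ 4 / (4 * η))
      = (Z - x ^ 2) ^ 2 / (4 * η) := by field_simp; ring
    have h2 : 0 ≤ (Z - x ^ 2) ^ 2 / (4 * η) := by positivity
    linarith
  have hmono : ∀ z : Fin N → ℝ, (∀ m, ∑ n, A m n * z n = b m) → ∀ s t : ℝ, 0 ≤ s → s ≤ t →
      ∑ n, z n * Real.log (u s n) + (∑ n, z n) * (r s ^ 2 / (2 * η)) - r s ^ 4 / (4 * η) ≤
      ∑ n, z n * Real.log (u t n) + (∑ n, z n) * (r t ^ 2 / (2 * η)) - r t ^ 4 / (4 * η) :=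
    fun z hz => aux_mono _ _ (deriv_E A b η r u hη hr hu hup z hz)
      (fun t ht => mul_nonneg (sq_nonneg _) (Finset.sum_nonneg fun m _ => sq_nonneg _))
  have hlim : ∀ z : Fin N → ℝ, (∀ n, 0 ≤ z n) → (∀ m, ∑ n, A m n * z n = b m) →
      ∃ l, Tendsto (fun s => ∑ n, z n * Real.log (u s n) + (∑ n, z n) * (r s ^ 2 / (2 * η))
        - r s ^ 4 / (4 * η)) atTop (𝓝 l) := by
    intro z hz hAz
    refine aux_lim _ ((∑ n, z n) ^ 2 / (4 * η)) (hmono z hAz) (fun t ht => ?_)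
    have := hsq (∑ n, z n) (r t)
    have := hsumlog z hz t ht
    linarith
  -- r bounded
  obtain ⟨R, hR⟩ : ∃ R, ∀ t, 0 ≤ t → r t ≤ R := by
    set E0 := ∑ n, z0 n * Real.log (u 0 n) + (∑ n, z0 n) * (r 0 ^ 2 / (2 * η))
        - r 0 ^ 4 / (4 * η) with hE0
    set Z := ∑ n, z0 n with hZ
    refine ⟨1 + Z ^ 2 + 4 * η * |E0| + 1 + |Z|, fun t ht => ?_⟩
    have h1 : E0 ≤ _ := hmono z0 hAz0 0 t le_rfl ht
    have h2 := hsumlog z0 hz0 t ht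
    have h3 : Z * (r t ^ 2 / (2 * η)) - r t ^ 4 / (4 * η) = 
      (Z ^ 2 - (Z - r t ^ 2) ^ 2) / (4 * η) := by field_simp; ring
    have h4 : E0 ≤ (Z ^ 2 - (Z - r t ^ 2) ^ 2) / (4 * η) := by linarith
    rw [le_div_iff₀ (by positivity)] at h4
    have h5 : -|E0| ≤ E0 := neg_abs_le _
    have h6 : (Z - r t ^ 2) ^ 2 ≤ Z ^ 2 + 4 * η * |E0| := by nlinarith
    have h7 : r t ^ 2 - Z ≤ Z ^ 2 + 4 * η * |E0| + 1 := by nlinarith [sq_nonneg (r t ^ 2 - Z - 1)]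
    have h8 := le_abs_self Z
    nlinarith [sq_nonneg (r t - 1)]
  -- u bounded below
  obtain ⟨B, hB⟩ : ∃ B, ∀ t, 0 ≤ t → B ≤ ∑ n, v n * Real.log (u t n) := by
    refine ⟨∑ n, v n * Real.log (u 0 n) + (∑ n, v n) * (r 0 ^ 2 / (2 * η))
      - (∑ n, v n) * (R ^ 2 / (2 * η)), fun t ht => ?_⟩
    have h1 := aux_const _ (fun t ht => (deriv_P A b η r u hη hr hu hup v t ht).congr_deriv
      (by rw [gG_dot]; simp [hAv])) t ht
    have h2 : (∑ n, v n) * (r t ^ 2 / (2 * η)) ≤ (∑ n, v n) * (R ^ 2 / (2 * η)) := by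
      have := hrp t ht
      have := hR t ht
      have : 0 ≤ ∑ n, v n := Finset.sum_nonneg fun n _ => (hv n).le
      gcongr
    linarith
  have hc : ∀ n, ∀ t, 0 ≤ t → Real.exp (B / v n) ≤ u t n := by
    intro n t ht
    rw [← Real.le_log_iff_exp_le (hup t ht n), div_le_iff₀ (hv n)]
    refine (hB t ht).trans ?_
    rw [← Finset.add_sum_erase _ _ (Finset.mem_univ n)]
    have : ∑ k ∈ Finset.univ.erase n, v k * Real.log (u t k) ≤ 0 :=
      Finset.sum_nonpos fun k _ => mul_nonpos_of_nonneg_of_nonpos (hv k).le (hlog t ht k)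
    linarith
  -- f → 0
  have bu : ∀ n, Bd (fun t => u t n) := fun n => ⟨1, fun t ht => by
    rw [abs_of_pos (hup t ht n)]; exact hu1 t ht n⟩
  have br : Bd r := ⟨R, fun t ht => by rw [abs_of_pos (hrp t ht)]; exact hR t ht⟩
  have be : ∀ m, Bd (fun t => eE A b (r t) (u t) m) := fun m =>
    (Bd.sum _ _ fun n => (Bd.const (A m n)).mul ((br.pow 2).mul ((bu n).pow 2))).add (Bd.const _)
  have bg : ∀ n, Bd (fun t => gG A b (r t) (u t) n) := fun n =>
    Bd.sum _ _ fun m => (Bd.const (A m n)).mul (be m)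
  have bs : Bd (fun t => sG A b (r t) (u t)) :=
    Bd.sum _ _ fun n => (bg n).mul ((bu n).pow 2)
  have nr : Nice r := ⟨br, fun t => (-1) * (η * r t * sG A b (r t) (u t)),
    (Bd.const (-1)).mul (((Bd.const η).mul br).mul bs),
    fun t ht => (hr t ht).congr_deriv (by ring)⟩
  have nu : ∀ n, Nice (fun t => u t n) := fun n => ⟨bu n,
    fun t => (-1) * (r t ^ 2 * u t n * (gG A b (r t) (u t) n + (-1) * sG A b (r t) (u t))),
    (Bd.const (-1)).mul (((br.pow 2).mul (bu n)).mul ((bg n).add ((Bd.const (-1)).mul bs))),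
    fun t ht => (hu t ht n).congr_deriv (by ring)⟩
  have ne : ∀ m, Nice (fun t => eE A b (r t) (u t) m) := fun m =>
    (Nice.sum _ _ fun n => (Nice.const (A m n)).mul ((nr.pow 2).mul ((nu n).pow 2))).add
      (Nice.const _)
  have nf : Nice (fun t => r t ^ 2 * ∑ m, eE A b (r t) (u t) m ^ 2) :=
    (nr.pow 2).mul (Nice.sum _ _ fun m => (ne m).pow 2)
  have hf0 : Tendsto (fun t => r t ^ 2 * ∑ m, eE A b (r t) (u t) m ^ 2) atTop (𝓝 0) := by
    obtain ⟨_, f', ⟨C, hC⟩, hf'⟩ := nf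
    obtain ⟨l, hl⟩ := hlim z0 hz0 hAz0
    exact aux_barbalat _ _ f' l C (deriv_E A b η r u hη hr hu hup z0 hAz0)
      (fun t ht => mul_nonneg (sq_nonneg _) (Finset.sum_nonneg fun m _ => sq_nonneg _)) hf' hC hl
  -- compactness
  set K : Set (ℝ × (Fin N → ℝ)) :=
    Set.Icc 0 R ×ˢ Set.Icc (fun n => Real.exp (B / v n)) (fun _ => 1) with hK
  have hKc : IsCompact K := isCompact_Icc.prod isCompact_Icc
  set s : ℝ → ℝ × (Fin N → ℝ) := fun t => (r t, u t) with hs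
  have hmem : ∀ᶠ t in atTop, s t ∈ K := by
    filter_upwards [eventually_ge_atTop 0] with t ht
    exact ⟨⟨(hrp t ht).le, hR t ht⟩, ⟨fun n => hc n t ht, fun n => hu1 t ht n⟩⟩
  have hKpos : ∀ p ∈ K, ∀ n, 0 < p.2 n := fun p hp n => (Real.exp_pos _).trans_le (hp.2.1 n)
  have hcn : ∀ p : ℝ × (Fin N → ℝ), MapClusterPt p atTop s → ∑ n, p.2 n ^ 2 = 1 := by
    intro p hp
    refine aux_cluster s p (fun p => ∑ n, p.2 n ^ 2) 1 hp (by fun_prop) ?_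
    refine tendsto_const_nhds.congr' ?_
    filter_upwards [eventually_ge_atTop 0] with t ht
    exact (hn t ht).symm
  by_cases hcase : ∀ p ∈ K, MapClusterPt p atTop s → p.1 = 0
  · -- r → 0
    have hr0' : Tendsto r atTop (𝓝 0) := by
      have hcont : Continuous (Prod.fst : ℝ × (Fin N → ℝ) → ℝ) := continuous_fst
      have h1 : Tendsto s atTop (𝓝ˢ (Prod.fst ⁻¹' {(0:ℝ)})) :=
        hKc.tendsto_nhdsSet_of_mapClusterPt hmem fun p hp hpc => hcase p hp hpc
      have h2 : Tendsto (Prod.fst : ℝ × (Fin N → ℝ) → ℝ) (𝓝ˢ (Prod.fst ⁻¹' {(0:ℝ)}))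
          (𝓝ˢ {(0:ℝ)}) := hcont.tendsto_nhdsSet (fun x hx => hx)
      rw [nhdsSet_singleton] at h2
      exact h2.comp h1
    refine ⟨fun _ => 0, tendsto_pi_nhds.2 fun n => ?_⟩
    refine squeeze_zero' (g := fun t => r t ^ 2) (Eventually.of_forall fun t => by positivity) ?_
      (by simpa using hr0'.pow 2)
    filter_upwards [eventually_ge_atTop 0] with t ht
    have h1 := hup t ht n
    have h2 := hu1 t ht n
    have h3 : u t n ^ 2 ≤ 1 := by nlinarith
    nlinarith [sq_nonneg (r t)]
  · push Not at hcase
    obtain ⟨⟨ρ, w⟩, hpK, hpc, hρ⟩ := hcase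
    simp only at hρ
    have hwn := hcn _ hpc
    have hwp := hKpos _ hpK
    simp only at hwn hwp
    have hF : ρ ^ 2 * ∑ m, eE A b ρ w m ^ 2 = 0 := by
      refine aux_cluster s (ρ, w) (fun p => p.1 ^ 2 * ∑ m, eE A b p.1 p.2 m ^ 2) 0 hpc ?_ hf0
      unfold eE
      fun_prop
    have hF2 : ∀ m, eE A b ρ w m = 0 := by
      have h1 : ∑ m, eE A b ρ w m ^ 2 = 0 := by
        rcases mul_eq_zero.1 hF with h | h
        · exact absurd (pow_eq_zero_iff two_ne_zero |>.1 h) hρ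
        · exact h
      intro m
      have := (Finset.sum_eq_zero_iff_of_nonneg (fun m _ => sq_nonneg _)).1 h1 m (Finset.mem_univ m)
      exact pow_eq_zero_iff two_ne_zero |>.1 this
    obtain ⟨l, hl⟩ := hlim (fun n => ρ ^ 2 * w n ^ 2) (fun n => by positivity) (fun m => by
      have := hF2 m
      unfold eE at this
      linarith)
    have hsum : ∑ n, ρ ^ 2 * w n ^ 2 = ρ ^ 2 := by rw [← Finset.mul_sum, hwn, mul_one]
    rw [hsum] at hl
    have hval : ∀ p ∈ K, MapClusterPt p atTop s → ∑ n, ρ ^ 2 * w n ^ 2 * Real.log (p.2 n)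
        + ρ ^ 2 * (p.1 ^ 2 / (2 * η)) - p.1 ^ 4 / (4 * η) = l := by
      intro p hp hpc
      refine aux_cluster s p (fun p => ∑ n, ρ ^ 2 * w n ^ 2 * Real.log (p.2 n)
        + ρ ^ 2 * (p.1 ^ 2 / (2 * η)) - p.1 ^ 4 / (4 * η)) l hpc ?_ hl
      have h1 : ∀ n, ContinuousAt (fun p : ℝ × (Fin N → ℝ) => Real.log (p.2 n)) p := fun n =>
        ContinuousAt.log (by fun_prop) (hKpos p hp n).ne'
      fun_prop
    have hconv : Tendsto s atTop (𝓝 (ρ, w)) := by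
      refine hKc.tendsto_nhds_of_unique_mapClusterPt hmem ?_
      rintro ⟨ρ', w'⟩ hqK hqc
      have h1 := hval _ hpK hpc
      have h2 := hval _ hqK hqc
      have hwn' := hcn _ hqc
      have hwp' := hKpos _ hqK
      have hρ' : 0 ≤ ρ' := hqK.1.1
      have hρ0 : 0 ≤ ρ := hpK.1.1
      simp only at h1 h2 hwn' hwp'
      have h3 : ∀ n, w n ^ 2 - w n * w' n ≤ w n ^ 2 * (Real.log (w n) - Real.log (w' n)) := by
        intro n
        have a := hwp n
        have b := hwp' n
        have h := Real.log_le_sub_one_of_pos (div_pos b a)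
        rw [Real.log_div b.ne' a.ne'] at h
        have h' : 1 - w' n / w n ≤ Real.log (w n) - Real.log (w' n) := by linarith
        calc w n ^ 2 - w n * w' n = w n ^ 2 * (1 - w' n / w n) := by field_simp
          _ ≤ _ := by gcongr
      have h4 : ∑ n, (w n - w' n) ^ 2 ≤
          2 * ∑ n, w n ^ 2 * (Real.log (w n) - Real.log (w' n)) := by
        have e : ∑ n, (w n - w' n) ^ 2 = 2 * ∑ n, (w n ^ 2 - w n * w' n) := by
          have e1 : ∑ n, (w n - w' n) ^ 2
            = 2 * ∑ n, (w n ^ 2 - w n * w' n) + (∑ n, w' n ^ 2 - ∑ n, w n ^ 2) := by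
            rw [Finset.mul_sum, ← Finset.sum_sub_distrib, ← Finset.sum_add_distrib]
            exact Finset.sum_congr rfl fun n _ => by ring
          rw [e1, hwn, hwn']; ring
        rw [e]
        have := Finset.sum_le_sum fun n (_ : n ∈ Finset.univ) => h3 n
        linarith
      have h5 : ρ ^ 2 * ∑ n, w n ^ 2 * (Real.log (w n) - Real.log (w' n))
          + (ρ ^ 2 - ρ' ^ 2) ^ 2 / (4 * η) = 0 := by
        have e : ρ ^ 2 * ∑ n, w n ^ 2 * (Real.log (w n) - Real.log (w' n))
          = ∑ n, ρ ^ 2 * w n ^ 2 * Real.log (w n) - ∑ n, ρ ^ 2 * w n ^ 2 * Real.log (w' n) := by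
          rw [Finset.mul_sum, ← Finset.sum_sub_distrib]
          exact Finset.sum_congr rfl fun n _ => by ring
        have e2 : (ρ ^ 2 - ρ' ^ 2) ^ 2 / (4 * η) = ρ ^ 2 * (ρ ^ 2 / (2 * η)) - ρ ^ 4 / (4 * η)
          - (ρ ^ 2 * (ρ' ^ 2 / (2 * η)) - ρ' ^ 4 / (4 * η)) := by field_simp; ring
        rw [e, e2]
        linarith
      have h6 : 0 ≤ ∑ n, (w n - w' n) ^ 2 := Finset.sum_nonneg fun n _ => sq_nonneg _
      have h7 : 0 ≤ (ρ ^ 2 - ρ' ^ 2) ^ 2 / (4 * η) := by positivity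
      have hρ2 : 0 < ρ ^ 2 := by positivity
      have h8 : 0 ≤ ρ ^ 2 * ∑ n, w n ^ 2 * (Real.log (w n) - Real.log (w' n)) :=
        mul_nonneg hρ2.le (by linarith)
      have h9 : ∑ n, (w n - w' n) ^ 2 = 0 := by
        have : ρ ^ 2 * ∑ n, w n ^ 2 * (Real.log (w n) - Real.log (w' n)) = 0 := by linarith
        rcases mul_eq_zero.1 this with h | h
        · exact absurd h hρ2.ne'
        · linarith
      have h10 : (ρ ^ 2 - ρ' ^ 2) ^ 2 / (4 * η) = 0 := by linarith
      have h11 : ρ ^ 2 = ρ' ^ 2 := by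
        rcases div_eq_zero_iff.1 h10 with h | h
        · exact sub_eq_zero.1 (pow_eq_zero_iff two_ne_zero |>.1 h)
        · exact absurd h (by positivity)
      refine Prod.ext ?_ (funext fun n => ?_)
      · exact ((pow_left_inj₀ hρ0 hρ' two_ne_zero).1 h11).symm
      · have := (Finset.sum_eq_zero_iff_of_nonneg (fun m _ => sq_nonneg _)).1 h9 n
          (Finset.mem_univ n)
        exact (sub_eq_zero.1 (pow_eq_zero_iff two_ne_zero |>.1 this)).symm
    refine ⟨fun n => ρ ^ 2 * w n ^ 2, ?_⟩
    have hcont : Continuous (fun p : ℝ × (Fin N → ℝ) => fun n => p.1 ^ 2 * p.2 n ^ 2) := by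
      fun_prop
    exact (hcont.tendsto (ρ, w)).comp hconv

end core

theorem stmt3 {M N : ℕ}
    (A : Matrix (Fin M) (Fin N) ℝ) (b : Fin M → ℝ)
    (Adag : Matrix (Fin N) (Fin M) ℝ) (hdag : IsMoorePenrose A Adag)
    (η : ℝ) (hη : 0 < η)
    (r : ℝ → ℝ) (u : ℝ → Fin N → ℝ)
    (hflow : WNFlow A b 2 (fun _ => η) (fun _ => 1) r u)
    (hr0 : 0 < r 0) (hu0 : ∀ n, 0 < u 0 n) (hnorm : eucNorm (u 0) = 1)
    (hr0le : r 0 ≤ min (Real.sqrt η) (eucNorm (Adag.mulVec b) ^ ((1 : ℝ) / 2)))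
    (v : Fin N → ℝ) (hv : ∀ n, 0 < v n) (hAv : A.mulVec v = 0)
    (hS : (Splus A b).Nonempty) :
    ∃ xinf : Fin N → ℝ,
      Tendsto (fun t => hadPow (normVec (r t) (u t)) 2) atTop (𝓝 xinf) := by
  obtain ⟨hfr, hfu⟩ := hflow
  have hS2 : ∀ t, 0 ≤ t → ∑ n, u t n ^ 2 = 1 := by
    have hc := aux_const (fun t => ∑ n, u t n ^ 2) (by
      intro t ht
      have h := HasDerivAt.fun_sum fun n (_ : n ∈ Finset.univ) => (hfu t ht n).fun_pow 2
      refine h.congr_deriv ?_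
      by_cases h0 : eucNorm (u t) = 0
      · simp [gradU, h0]
      · have hsq : ∑ n, u t n * u t n = eucNorm (u t) ^ 2 := by
          rw [eucNorm, Real.sq_sqrt (Finset.sum_nonneg fun n _ => sq_nonneg _)]
          exact Finset.sum_congr rfl fun n _ => by ring
        set g := gradLoss A b 2 (normVec (r t) (u t)) with hg
        set D := ∑ k, u t k * g k with hD
        have e : ∀ n, ((2:ℕ):ℝ) * u t n ^ (2 - 1) * -(1 * gradU A b 2 (r t) (u t) n)
            = -2 * (r t / eucNorm (u t)) * (u t n * g n)
              + 2 * (r t / eucNorm (u t)) * (D / eucNorm (u t) ^ 2) * (u t n * u t n) := by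
          intro n
          rw [gradU]
          push_cast
          ring
        simp only [e]
        rw [Finset.sum_add_distrib, ← Finset.mul_sum, ← Finset.mul_sum, hsq, ← hD]
        field_simp
        ring)
    intro t ht
    have h1 := hc t ht
    rw [h1]
    rw [eucNorm, Real.sqrt_eq_one] at hnorm
    exact hnorm
  have hN : ∀ t, 0 ≤ t → eucNorm (u t) = 1 := fun t ht => by
    rw [eucNorm, hS2 t ht, Real.sqrt_one]
  have hnv : ∀ t, 0 ≤ t → ∀ n, normVec (r t) (u t) n = r t * u t n := fun t ht n => by
    simp [normVec, hN t ht]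
  have hgl : ∀ t, 0 ≤ t → ∀ n, gradLoss A b 2 (normVec (r t) (u t)) n
      = gG A b (r t) (u t) n * (r t * u t n) := by
    intro t ht n
    simp only [gradLoss, gG, eE, Matrix.mulVec, dotProduct, hadPow, hnv t ht, Matrix.transpose_apply,
      Pi.sub_apply, mul_pow, sub_eq_add_neg]
    norm_num
  obtain ⟨z0, hz0, hAz0⟩ := hS
  obtain ⟨x, hx⟩ := core A b η r u hη
    (fun t ht => (hfr t ht).congr_deriv (by
      simp only [gradR, hgl t ht, hN t ht, div_one, sG]
      rw [mul_assoc, Finset.mul_sum (a := r t)]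
      congr 2
      exact Finset.sum_congr rfl fun n _ => by ring))
    (fun t ht n => (hfu t ht n).congr_deriv (by
      simp only [gradU, hgl t ht, hN t ht, div_one, sG, one_pow, one_mul]
      have : ∑ k, u t k * (gG A b (r t) (u t) k * (r t * u t k))
          = r t * ∑ k, gG A b (r t) (u t) k * u t k ^ 2 := by
        rw [Finset.mul_sum]
        exact Finset.sum_congr rfl fun n _ => by ring
      rw [this]
      ring))
    hr0 hu0 hS2 v hv (fun m => congrFun hAv m) z0 hz0 (fun m => congrFun hAz0 m)
  refine ⟨x, hx.congr' ?_⟩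
  filter_upwards [eventually_ge_atTop 0] with t ht
  funext n
  rw [hadPow, hnv t ht, mul_pow]

end
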